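/- **Setup.** Let $g(x,y)=\chi_E(x,y)\prod_{i=1}^n|f_i(x,y)|^{\gamma_i}$, where $\gamma_i\in\mathbb R$, the $f_i$ are real analytic and not identically zero near the origin of $\mathbb R^2$, $g$ is integrable near the origin, and $E$ is either a disk $\{x^2+y^2<r_0^2\}$ or a finite disjoint union of open regions, each of them one of the two regions into which the disk $\{x^2+y^2<r_0^2\}$ is cut by two curves joining the origin to its boundary circle; each curve is an arc of one half of a graph $y=h(|x|^{1/N})$ or $x=h(|y|^{1/N})$ with $h$ real analytic, $h(0)=0$, $N$ a positive integer, and all these curves are pairwise disjoint except at the origin. Let $(x_0,y_0)\in\mathbb R^2$, $A>0$, $c>0$, and let $U$ be an open neighborhood of the origin on which $g$ is integrable and on which $m(x_0+x,y_0+y)=\alpha(x,y)g(x,y)$, where on $U$ the real function $\alpha$ is $C^1$ away from the origin, $|\alpha|\le A$, $|\nabla\alpha(x,y)|\le A(x^2+y^2)^{-1/2}$ for $(x,y)\ne(0,0)$, and $\alpha>c$. Let $\varphi$ be a nonnegative smooth compactly supported function that equals $1$ near $(x_0,y_0)$ and whose support is contained in $(x_0,y_0)+U$, and let $$K_\varphi(t,u)=\int_{\mathbb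 R^2}\varphi(x,y)\,m(x,y)\,e^{i(tx+uy)}\,dx\,dy .$$ **Exponents.** For a unit vector $v=(v_1,v_2)$ with $v^\perp=(v_2,-v_1)$, the strip exponents $\delta_v>0$, $e_v\in\{0,1\}$ are those for which, for each sufficiently small $c'>0$, $\int_{\{|(x,y)\cdot v|<r,\ |(x,y)\cdot v^\perp|<c'\}}g$ is bounded above and below by positive constants (depending on $c'$) times $r^{\delta_v}|\ln r|^{e_v}$ for $0<r<c'$. The disk exponents $\epsilon>0$, $d\in\{0,1\}$ are those for which $\int_{x^2+y^2<r^2}g$ is bounded above and below by positive constants times $r^{\epsilon}|\ln r|^{d}$ for all small $r>0$. For $H>0$ let $l_H$ be the set of points within distance $H$ of the line $l$ through the origin in direction $v$. **Claim.** 1. If $\delta_v<1$ (which holds for every $v$ when $\epsilon<\tfrac12$, because $\delta_v\le\epsilon$), then for every $H>0$ and every $\delta>\delta_v$ there is no constant $C$ with $|K_\varphi(t,u)|\le C(2+|(t,u)|)^{-\delta}$ for all $(t,u)\in l_H$. More generally, for no integer $k\ge0$ is there a constant $C$ with $|K_\varphi(t,u)|\le C(2+|(t,u)|)^{-\delta}(\ln(2+|(t,u)|))^{k}$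 for all $(t,u)\in l_H$. 2. If $\epsilon<1$, then for every unit vector $v$, every $H>0$, every $\delta>\epsilon$ and every integer $k\ge0$ there is no constant $C$ with $|K_\varphi(t,u)|\le C(2+|(t,u)|)^{-\delta}(\ln(2+|(t,u)|))^{k}$ for all $(t,u)\in l_H$. 3. Let $\delta_0$ be the minimum (or, more generally, the infimum) of $\delta_v$ over all unit vectors $v$. If $\delta_0<1$, then for every $\delta>\delta_0$ and every integer $k\ge0$ there is no constant $C$ with $|K_\varphi(t,u)|\le C(2+|(t,u)|)^{-\delta}(\ln(2+|(t,u)|))^{k}$ for all $(t,u)\in\mathbb R^2$. -/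

import Mathlib

open MeasureTheory Set Filter
open scoped Topology ContDiff

noncomputable section

/-- The Euclidean magnitude `|(x,y)| = √(x²+y²)` of a point of `ℝ²`
(the norm of `ℝ × ℝ` in Mathlib is the sup norm). -/
def nrm2 (p : ℝ × ℝ) : ℝ := Real.sqrt (p.1 ^ 2 + p.2 ^ 2)

/-- The open Euclidean disk `{(x,y) : x²+y² < r²}` centered at the origin. -/
def disk2 (r : ℝ) : Set (ℝ × ℝ) := {p : ℝ × ℝ | p.1 ^ 2 + p.2 ^ 2 < r ^ 2}

/-- The circle `{(x,y) : x²+y² = r²}` centered at the origin. -/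
def circle2 (r : ℝ) : Set (ℝ × ℝ) := {p : ℝ × ℝ | p.1 ^ 2 + p.2 ^ 2 = r ^ 2}

/-- Dot product on `ℝ²`. -/
def dot2 (p q : ℝ × ℝ) : ℝ := p.1 * q.1 + p.2 * q.2

/-- The perpendicular vector `v^⊥ = (v₂, −v₁)`. -/
def perp2 (v : ℝ × ℝ) : ℝ × ℝ := (v.2, -v.1)

/-- The function `g = χ_E · ∏ᵢ |fᵢ|^(γᵢ)`. -/
def stdFun (n : ℕ) (f : Fin n → ℝ × ℝ → ℝ) (γ : Fin n → ℝ) (E : Set (ℝ × ℝ)) :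
    ℝ × ℝ → ℝ :=
  E.indicator fun p => ∏ i, |f i p| ^ (γ i)

/-- A boundary curve: the arc, from the origin up to the circle of radius `r₀`, of one half
(`σ = 1` or `σ = -1`) of a graph `y = h(|x|^{1/N})` or `x = h(|y|^{1/N})`, with `h` real
analytic and `h 0 = 0`.  The arc is parametrized by `s = |x|` (resp. `s = |y|`) in `[0,b]`,
stays in the open disk for `s < b` and reaches the circle at `s = b`. -/
def IsPuiseuxBdryCurve (r₀ : ℝ) (C : Set (ℝ × ℝ)) : Prop :=
  ∃ (N : ℕ) (h : ℝ → ℝ) (b σ : ℝ) (κ : ℝ → ℝ × ℝ),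
    0 < N ∧ 0 < b ∧ (σ = 1 ∨ σ = -1) ∧
    AnalyticOnNhd ℝ h (Icc (0 : ℝ) (b ^ ((N : ℝ)⁻¹))) ∧ h 0 = 0 ∧
    ((∀ s, κ s = (σ * s, h (s ^ ((N : ℝ)⁻¹)))) ∨ (∀ s, κ s = (h (s ^ ((N : ℝ)⁻¹)), σ * s))) ∧
    C = κ '' Icc (0 : ℝ) b ∧
    (∀ s ∈ Ico (0 : ℝ) b, κ s ∈ disk2 r₀) ∧ κ b ∈ circle2 r₀

/-- The admissible form of the set `E`: either a disk centered at the origin, or a finite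
disjoint union of open regions, each of them one of the regions into which two boundary curves
(joining the origin to the circle of radius `r₀`) cut the disk, where all the boundary curves
are pairwise disjoint in the closed disk, apart from their common end point at the origin. -/
def IsStdDomain (E : Set (ℝ × ℝ)) : Prop :=
  (∃ r₀ > (0 : ℝ), E = disk2 r₀) ∨
  (∃ r₀ > (0 : ℝ), ∃ m : ℕ, ∃ Es : Fin m → Set (ℝ × ℝ), ∃ Cs : Fin m → Fin 2 → Set (ℝ × ℝ),
    E = Set.iUnion Es ∧
    (Pairwise fun i j => Disjoint (Es i) (Es j)) ∧
    (∀ i, IsOpen (Es i) ∧ IsConnected (Es i) ∧ Es i ⊆ disk2 r₀ \ (Cs i 0 ∪ Cs i 1) ∧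
      frontier (Es i) ⊆ Cs i 0 ∪ Cs i 1 ∪ circle2 r₀) ∧
    (∀ i j, IsPuiseuxBdryCurve r₀ (Cs i j)) ∧
    (Pairwise fun q q' : Fin m × Fin 2 =>
      Disjoint (Cs q.1 q.2 \ {0}) (Cs q'.1 q'.2 \ {0})))

/-- The standard form: the `fᵢ` are real analytic and not identically zero near the origin,
`g = χ_E ∏ |fᵢ|^(γᵢ)` is integrable near the origin, and `E` is an admissible domain. -/
structure StandardForm (n : ℕ) (f : Fin n → ℝ × ℝ → ℝ) (γ : Fin n → ℝ)
    (E : Set (ℝ × ℝ)) : Prop where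
  analytic : ∃ U ∈ 𝓝 (0 : ℝ × ℝ), ∀ i, AnalyticOnNhd ℝ (f i) U
  nontriv : ∀ i, ¬ (∀ᶠ p in 𝓝 (0 : ℝ × ℝ), f i p = 0)
  integ : ∃ U ∈ 𝓝 (0 : ℝ × ℝ), IntegrableOn (stdFun n f γ E) U
  domain : IsStdDomain E

/-- `ε`, `d` are the disk exponents of `g`: `ε > 0`, `d ∈ {0,1}` and
`c₁ r^ε |ln r|^d ≤ ∫_{x²+y²<r²} g ≤ c₂ r^ε |ln r|^d` for all small `r`. -/
def BallBound (g : ℝ × ℝ → ℝ) (ε : ℝ) (d : ℕ) : Prop :=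
  0 < ε ∧ d ≤ 1 ∧ ∃ c₁ > (0 : ℝ), ∃ c₂ > (0 : ℝ), ∃ c₃ > (0 : ℝ), ∀ r : ℝ, 0 < r → r < c₃ →
    c₁ * r ^ ε * |Real.log r| ^ d ≤ (∫ p in disk2 r, g p) ∧
    (∫ p in disk2 r, g p) ≤ c₂ * r ^ ε * |Real.log r| ^ d

/-- The strip `{(x,y) : |(x,y)·v| < r, |(x,y)·v^⊥| < c}`. -/
def strip2 (v : ℝ × ℝ) (r c : ℝ) : Set (ℝ × ℝ) :=
  {p : ℝ × ℝ | |dot2 p v| < r ∧ |dot2 p (perp2 v)| < c}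

/-- `δ`, `e` are the strip exponents of `g` in the direction `v`: `δ > 0`, `e ∈ {0,1}` and, for
every small `c`, `a r^δ |ln r|^e ≤ ∫_{strip} g ≤ b r^δ |ln r|^e` for `0 < r < c`, where the strip
is `strip2 v r c` and `a, b > 0` may depend on `c`. -/
def StripBound (g : ℝ × ℝ → ℝ) (v : ℝ × ℝ) (δ : ℝ) (e : ℕ) : Prop :=
  0 < δ ∧ e ≤ 1 ∧ ∃ cv > (0 : ℝ), ∀ c : ℝ, 0 < c → c < cv →
    ∃ a > (0 : ℝ), ∃ b > (0 : ℝ), ∀ r : ℝ, 0 < r → r < c →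
      a * r ^ δ * |Real.log r| ^ e ≤ (∫ p in strip2 v r c, g p) ∧
      (∫ p in strip2 v r c, g p) ≤ b * r ^ δ * |Real.log r| ^ e

/-- On the open set `U`, the factor `α` is `C¹` away from the origin, `|α| ≤ A`, and the
Euclidean length of its gradient is at most `A (x²+y²)^{-1/2}`. -/
def AlphaBound (α : ℝ × ℝ → ℝ) (A : ℝ) (U : Set (ℝ × ℝ)) : Prop :=
  ContDiffOn ℝ 1 α (U \ {0}) ∧ (∀ p ∈ U, |α p| ≤ A) ∧
  ∀ p ∈ U \ {0}, nrm2 (fderiv ℝ α p (1, 0), fderiv ℝ α p (0, 1)) ≤ A * (nrm2 p)⁻¹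

/-- The localized kernel `K_φ(t,u) = ∫ φ(x,y) m(x,y) e^{i(tx+uy)} dx dy`. -/
def Kphi (φ m : ℝ × ℝ → ℝ) (q : ℝ × ℝ) : ℂ :=
  ∫ p : ℝ × ℝ, ((φ p * m p : ℝ) : ℂ) * Complex.exp (Complex.I * ((dot2 q p : ℝ) : ℂ))

/-- `l_H`: the points within distance `H` of the line `l` through the origin in direction `v`. -/
def lineNhd (v : ℝ × ℝ) (H : ℝ) : Set (ℝ × ℝ) :=
  {q : ℝ × ℝ | ∃ s : ℝ, nrm2 (q - s • v) ≤ H}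

/-- `|K(t,u)| ≤ C (2+|(t,u)|)^{-δ} (ln (2+|(t,u)|))^k` on `S`, for some constant `C`.
For `k = 0` this is the bound without logarithm. -/
def HasDecayOn (K : ℝ × ℝ → ℂ) (S : Set (ℝ × ℝ)) (δ : ℝ) (k : ℕ) : Prop :=
  ∃ C : ℝ, ∀ q ∈ S, ‖K q‖ ≤ C * (2 + nrm2 q) ^ (-δ) * Real.log (2 + nrm2 q) ^ k

end

theorem integrable_abs_rpow_mul_exp_neg_sq {s : ℝ} (hs : -1 < s) :
    Integrable fun x : ℝ => |x| ^ s * Real.exp (-x ^ 2) := by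
  have h := (integrable_fun_norm_addHaar (volume : Measure ℝ)
    (f := fun y : ℝ => y ^ s * Real.exp (-y ^ 2))).2 (by
      simpa using integrableOn_rpow_mul_exp_neg_mul_sq one_pos hs)
  simpa [Real.norm_eq_abs, sq_abs] using h

theorem integrable_mul_exp_I_mul_gaussian {X : Type*} [MeasurableSpace X] {μ : Measure X}
    [SFinite μ] {F L : X → ℝ} (hF : Integrable F μ) (hL : Measurable L) (r : ℝ) :
    Integrable (Function.uncurry fun (p : X) (x : ℝ) =>
      (F p : ℂ) * Complex.exp (Complex.I * ((x / r * L p : ℝ) : ℂ)) * (Real.exp (-x ^ 2) : ℂ))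
      (μ.prod volume) := by
  have hg : Integrable fun x : ℝ => (Real.exp (-x ^ 2) : ℂ) := by
    have := (integrable_exp_neg_mul_sq (b := 1) one_pos).ofReal (𝕜 := ℂ)
    simpa using this
  have h := hF.ofReal (𝕜 := ℂ) |>.mul_prod hg
  have hm : Measurable fun z : X × ℝ =>
      Complex.exp (Complex.I * ((z.2 / r * L z.1 : ℝ) : ℂ)) := by fun_prop
  refine (h.bdd_mul (c := 1) hm.aestronglyMeasurable (ae_of_all _ fun z => ?_)).congr
    (ae_of_all _ fun z => ?_)
  · rw [mul_comm, Complex.norm_exp_ofReal_mul_I]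
  · simp only [Function.uncurry]
    simp
    ring

/-- The Gaussian average of `F` at scale `r` along `L` is an average of the Fourier transform
of `F` along `L`. -/
theorem integral_fourier_mul_gaussian {X : Type*} [MeasurableSpace X] {μ : Measure X}
    [SFinite μ] {F L : X → ℝ} (hF : Integrable F μ) (hL : Measurable L) (r : ℝ) :
    ∫ x : ℝ, (∫ p, (F p : ℂ) * Complex.exp (Complex.I * ((x / r * L p : ℝ) : ℂ)) ∂μ)
      * (Real.exp (-x ^ 2) : ℂ) =
    ((√Real.pi * ∫ p, F p * Real.exp (-(L p / r) ^ 2 / 4) ∂μ : ℝ) : ℂ) := by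
  simp_rw [← integral_mul_const]
  rw [← integral_integral_swap (integrable_mul_exp_I_mul_gaussian hF hL r),
    ← integral_const_mul, ← integral_complex_ofReal]
  refine integral_congr_ae (ae_of_all _ fun p => ?_)
  have h := fourierIntegral_gaussian (b := 1) (by simp) ((L p / r : ℝ) : ℂ)
  have hpi : ((Real.pi : ℂ) / 1) ^ (1 / 2 : ℂ) = ((√Real.pi : ℝ) : ℂ) := by
    rw [div_one, Real.sqrt_eq_rpow, Complex.ofReal_cpow Real.pi_pos.le]
    simp
  rw [hpi] at h
  simp only [mul_assoc]
  rw [integral_const_mul]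
  have h2 : ∫ x : ℝ, Complex.exp (Complex.I * ((x / r * L p : ℝ) : ℂ)) * (Real.exp (-x ^ 2) : ℂ)
      = ((√Real.pi : ℝ) : ℂ) * Complex.exp (-((L p / r : ℝ) : ℂ) ^ 2 / (4 * 1)) := by
    rw [← h]
    refine integral_congr_ae (ae_of_all _ fun x => ?_)
    simp only
    congr 2
    · push_cast; ring
    · push_cast; ring_nf
  rw [h2]
  push_cast
  ring_nf

/-- Decay of order `δ < 1` of the Fourier transform of `F ≥ 0` along `L` bounds the mass that `F`
gives to the strips `{|L| < r}` by a multiple of `r ^ δ`. -/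
theorem setIntegral_strip_le_of_fourier_decay {X : Type*} [MeasurableSpace X] {μ : Measure X}
    [SFinite μ] {F L : X → ℝ} (hF : Integrable F μ) (hF0 : ∀ p, 0 ≤ F p) (hL : Measurable L)
    {C δ : ℝ} (hδ : δ < 1)
    (hdecay : ∀ t : ℝ, t ≠ 0 →
      ‖∫ p, (F p : ℂ) * Complex.exp (Complex.I * ((t * L p : ℝ) : ℂ)) ∂μ‖ ≤ C * |t| ^ (-δ)) :
    ∃ C' : ℝ, ∀ r : ℝ, 0 < r → ∫ p in {p | |L p| < r}, F p ∂μ ≤ C' * r ^ δ := by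
  set J := ∫ x : ℝ, |x| ^ (-δ) * Real.exp (-x ^ 2) with hJ
  have hJi := integrable_abs_rpow_mul_exp_neg_sq (s := -δ) (by linarith)
  refine ⟨Real.exp (1 / 4) * ((√Real.pi)⁻¹ * (C * J)), fun r hr => ?_⟩
  have hpi : 0 < √Real.pi := Real.sqrt_pos.2 Real.pi_pos
  have hG : Integrable (fun p => F p * Real.exp (-(L p / r) ^ 2 / 4)) μ := by
    refine hF.mul_bdd (c := 1) (by fun_prop) (ae_of_all _ fun p => ?_)
    rw [Real.norm_eq_abs, Real.abs_exp, Real.exp_le_one_iff]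
    nlinarith [sq_nonneg (L p / r)]
  have hG0 : ∀ p, 0 ≤ F p * Real.exp (-(L p / r) ^ 2 / 4) := fun p =>
    mul_nonneg (hF0 p) (Real.exp_pos _).le
  have hmain : √Real.pi * ∫ p, F p * Real.exp (-(L p / r) ^ 2 / 4) ∂μ ≤ C * J * r ^ δ := by
    have h1 : √Real.pi * ∫ p, F p * Real.exp (-(L p / r) ^ 2 / 4) ∂μ =
        ‖∫ x : ℝ, (∫ p, (F p : ℂ) * Complex.exp (Complex.I * ((x / r * L p : ℝ) : ℂ)) ∂μ)
          * (Real.exp (-x ^ 2) : ℂ)‖ := by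
      rw [integral_fourier_mul_gaussian hF hL r, Complex.norm_real, Real.norm_eq_abs,
        abs_of_nonneg (mul_nonneg hpi.le (integral_nonneg hG0))]
    have h2 : C * J * r ^ δ = ∫ x : ℝ, C * r ^ δ * (|x| ^ (-δ) * Real.exp (-x ^ 2)) := by
      rw [integral_const_mul, ← hJ]
      ring
    rw [h1, h2]
    refine norm_integral_le_of_norm_le (hJi.const_mul _) ?_
    have hne : ∀ᵐ x : ℝ, x ≠ 0 := Measure.ae_ne volume 0
    filter_upwards [hne] with x hx
    rw [norm_mul, Complex.norm_real, Real.norm_eq_abs, Real.abs_exp]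
    have h3 := hdecay (x / r) (div_ne_zero hx hr.ne')
    have h4 : |x / r| ^ (-δ) = r ^ δ * |x| ^ (-δ) := by
      rw [abs_div, abs_of_pos hr, Real.div_rpow (abs_nonneg x) hr.le, Real.rpow_neg hr.le δ,
        div_inv_eq_mul, mul_comm]
    rw [h4] at h3
    calc _ ≤ C * (r ^ δ * |x| ^ (-δ)) * Real.exp (-x ^ 2) :=
          mul_le_mul_of_nonneg_right h3 (Real.exp_pos _).le
      _ = _ := by ring
  have hS : MeasurableSet {p | |L p| < r} := measurableSet_lt (by fun_prop) measurable_const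
  have hstep : ∫ p in {p | |L p| < r}, F p ∂μ ≤
      ∫ p in {p | |L p| < r}, Real.exp (1 / 4) * (F p * Real.exp (-(L p / r) ^ 2 / 4)) ∂μ := by
    refine setIntegral_mono_on hF.integrableOn (hG.const_mul _).integrableOn hS fun p hp => ?_
    have h5 : 1 ≤ Real.exp (1 / 4) * Real.exp (-(L p / r) ^ 2 / 4) := by
      rw [← Real.exp_add, Real.one_le_exp_iff]
      have : |L p / r| < 1 := by
        rw [abs_div, abs_of_pos hr, div_lt_one hr]
        exact hp
      nlinarith [(sq_lt_one_iff_abs_lt_one (L p / r)).2 this]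
    nlinarith [hF0 p]
  have hstep2 : ∫ p in {p | |L p| < r}, Real.exp (1 / 4) *
      (F p * Real.exp (-(L p / r) ^ 2 / 4)) ∂μ ≤
      Real.exp (1 / 4) * ∫ p, F p * Real.exp (-(L p / r) ^ 2 / 4) ∂μ := by
    rw [← integral_const_mul]
    exact setIntegral_le_integral (hG.const_mul _)
      (ae_of_all _ fun p => mul_nonneg (Real.exp_pos _).le (hG0 p))
  have hlast : ∫ p, F p * Real.exp (-(L p / r) ^ 2 / 4) ∂μ ≤
      (√Real.pi)⁻¹ * (C * J * r ^ δ) := by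
    rw [inv_mul_eq_div, le_div_iff₀ hpi, mul_comm]
    exact hmain
  calc _ ≤ _ := hstep.trans hstep2
    _ ≤ _ := mul_le_mul_of_nonneg_left hlast (Real.exp_pos _).le
    _ = _ := by ring

theorem not_lower_rpow_log_le_rpow {a C δ δ' ρ : ℝ} {e : ℕ} (ha : 0 < a) (hρ : 0 < ρ)
    (hlt : δ < δ') (h : ∀ r, 0 < r → r < ρ → a * r ^ δ * |Real.log r| ^ e ≤ C * r ^ δ') :
    False := by
  have hlim : Tendsto (fun r : ℝ => C * r ^ (δ' - δ)) (𝓝[>] 0) (𝓝 0) := by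
    have h0 : Tendsto (fun r : ℝ => r ^ (δ' - δ)) (𝓝 0) (𝓝 0) := by
      have := (Real.continuousAt_rpow_const 0 (δ' - δ) (Or.inr (by linarith))).tendsto
      rwa [Real.zero_rpow (by linarith)] at this
    simpa using (h0.mono_left nhdsWithin_le_nhds).const_mul C
  have hlog : ∀ᶠ r in 𝓝[>] (0 : ℝ), Real.log r ≤ -1 :=
    Real.tendsto_log_nhdsGT_zero.eventually_le_atBot (-1)
  have hsmall : ∀ᶠ r in 𝓝[>] (0 : ℝ), r < ρ := nhdsWithin_le_nhds (gt_mem_nhds hρ)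
  obtain ⟨r, h1, h2, h3, h4⟩ := ((hlim.eventually (gt_mem_nhds ha)).and
    (hlog.and (hsmall.and self_mem_nhdsWithin))).exists
  have hr : 0 < r := h4
  have h5 := h r hr h3
  have h6 : (1 : ℝ) ≤ |Real.log r| ^ e := one_le_pow₀ (by
    rw [abs_of_nonpos (by linarith)]
    linarith)
  have hp : 0 < r ^ δ := Real.rpow_pos_of_pos hr _
  have h7 : C * r ^ δ' = C * r ^ (δ' - δ) * r ^ δ := by
    rw [mul_assoc, ← Real.rpow_add hr, sub_add_cancel]
  rw [h7] at h5
  have h8 : a * r ^ δ ≤ a * r ^ δ * |Real.log r| ^ e :=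
    le_mul_of_one_le_right (mul_pos ha hp).le h6
  nlinarith

theorem rpow_neg_mul_log_pow_le {δ δ' : ℝ} (hlt : δ' < δ) (k : ℕ) :
    ∃ M : ℝ, 0 ≤ M ∧ ∀ x : ℝ, 1 ≤ x → x ^ (-δ) * Real.log x ^ k ≤ M * x ^ (-δ') := by
  set η := (δ - δ') / (k + 1) with hη
  have hk : (0 : ℝ) < k + 1 := by positivity
  have hη0 : 0 < η := div_pos (by linarith) hk
  refine ⟨(η⁻¹) ^ k, by positivity, fun x hx => ?_⟩
  have hx0 : 0 < x := by linarith
  have h1 : Real.log x ^ k ≤ (x ^ η / η) ^ k :=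
    pow_le_pow_left₀ (Real.log_nonneg hx) (Real.log_le_rpow_div hx0.le hη0) k
  have h2 : x ^ (-δ) * (x ^ η) ^ k ≤ x ^ (-δ') := by
    rw [← Real.rpow_natCast, ← Real.rpow_mul hx0.le, ← Real.rpow_add hx0]
    refine Real.rpow_le_rpow_of_exponent_le hx ?_
    have : η * (k + 1) = δ - δ' := by rw [hη]; field_simp
    nlinarith
  calc x ^ (-δ) * Real.log x ^ k ≤ x ^ (-δ) * (x ^ η / η) ^ k :=
        mul_le_mul_of_nonneg_left h1 (Real.rpow_nonneg hx0.le _)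
    _ = (η⁻¹) ^ k * (x ^ (-δ) * (x ^ η) ^ k) := by rw [div_eq_mul_inv, mul_pow]; ring
    _ ≤ _ := mul_le_mul_of_nonneg_left h2 (by positivity)

theorem stdFun_nonneg (n : ℕ) (f : Fin n → ℝ × ℝ → ℝ) (γ : Fin n → ℝ) (E : Set (ℝ × ℝ))
    (p : ℝ × ℝ) : 0 ≤ stdFun n f γ E p :=
  Set.indicator_nonneg (fun q _ => Finset.prod_nonneg fun i _ =>
    Real.rpow_nonneg (abs_nonneg (f i q)) _) p

theorem nrm2_smul (t : ℝ) (v : ℝ × ℝ) : nrm2 (t • v) = |t| * nrm2 v := by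
  simp only [nrm2, Prod.smul_fst, Prod.smul_snd, smul_eq_mul]
  rw [← Real.sqrt_sq_eq_abs, ← Real.sqrt_mul (sq_nonneg t)]
  congr 1
  ring

theorem smul_mem_lineNhd (v : ℝ × ℝ) {H : ℝ} (hH : 0 < H) (t : ℝ) : t • v ∈ lineNhd v H :=
  ⟨t, by simpa [nrm2] using hH.le⟩

theorem norm_Kphi_eq_norm_translate (φ m : ℝ × ℝ → ℝ) (z q : ℝ × ℝ) :
    ‖Kphi φ m q‖ = ‖∫ p : ℝ × ℝ, ((φ (z + p) * m (z + p) : ℝ) : ℂ) *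
      Complex.exp (Complex.I * ((dot2 q p : ℝ) : ℂ))‖ := by
  have h : Kphi φ m q = Complex.exp (((dot2 q z : ℝ) : ℂ) * Complex.I) *
      ∫ p : ℝ × ℝ, ((φ (z + p) * m (z + p) : ℝ) : ℂ) *
        Complex.exp (Complex.I * ((dot2 q p : ℝ) : ℂ)) := by
    rw [Kphi, ← integral_add_left_eq_self _ z, ← integral_const_mul]
    refine integral_congr_ae (ae_of_all _ fun p => ?_)
    have hd : dot2 q (z + p) = dot2 q z + dot2 q p := by
      simp only [dot2, Prod.fst_add, Prod.snd_add]; ring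
    simp only [hd]
    rw [Complex.ofReal_add, mul_add, Complex.exp_add]
    ring_nf
  rw [h, norm_mul, Complex.norm_exp_ofReal_mul_I, one_mul]

/-- Decay of `K` along the line through the origin in direction `v` bounds the integrals of `g`
over subsets of the strips `{|p·v| < r}` near the origin. -/
theorem setIntegral_le_of_hasDecayOn {g α m φ : ℝ × ℝ → ℝ} {z : ℝ × ℝ} {A c : ℝ}
    {U S : Set (ℝ × ℝ)} (hg0 : ∀ p, 0 ≤ g p) (hUo : IsOpen U)
    (hU0 : (0 : ℝ × ℝ) ∈ U) (hgU : IntegrableOn g U) (hα : AlphaBound α A U)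
    (hm : ∀ p ∈ U, m (z + p) = α p * g p) (hc : 0 < c) (hαc : ∀ p ∈ U, c < α p)
    (hφsmooth : ContDiff ℝ ∞ φ) (hφcpt : HasCompactSupport φ) (hφnn : ∀ p, 0 ≤ φ p)
    (hφone : ∀ᶠ p in 𝓝 z, φ p = 1) (hφsupp : ∀ p : ℝ × ℝ, z + p ∈ tsupport φ → p ∈ U)
    {v : ℝ × ℝ} (hv : nrm2 v = 1) (hS : ∀ t : ℝ, t • v ∈ S) {δ δ' : ℝ} {k : ℕ}
    (hδ'0 : 0 < δ') (hδ'1 : δ' < 1) (hlt : δ' < δ) (hK : HasDecayOn (Kphi φ m) S δ k) :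
    ∃ C' ρ : ℝ, 0 < ρ ∧ ∀ r : ℝ, 0 < r → ∀ T : Set (ℝ × ℝ), MeasurableSet T →
      (∀ p ∈ T, |p.1| < ρ ∧ |p.2| < ρ) → (∀ p ∈ T, |dot2 p v| < r) →
      ∫ p in T, g p ≤ C' * r ^ δ' := by
  set F : ℝ × ℝ → ℝ := fun p => φ (z + p) * m (z + p) with hFdef
  have hφ0 : ∀ p, p ∉ U → φ (z + p) = 0 := fun p hp =>
    image_eq_zero_of_notMem_tsupport fun h => hp (hφsupp p h)
  have hF0 : ∀ p, 0 ≤ F p := fun p => by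
    by_cases hp : p ∈ U
    · simp only [hFdef, hm p hp]
      exact mul_nonneg (hφnn _) (mul_nonneg (hc.trans (hαc p hp)).le (hg0 p))
    · simp [hFdef, hφ0 p hp]
  have hαm : AEStronglyMeasurable α (volume.restrict U) := by
    have h1 : AEStronglyMeasurable α (volume.restrict (U \ {0})) :=
      hα.1.continuousOn.aestronglyMeasurable (hUo.measurableSet.diff (measurableSet_singleton 0))
    rwa [Measure.restrict_congr_set (sdiff_null_ae_eq_self (measure_singleton 0))] at h1
  obtain ⟨B, hB⟩ := hφcpt.exists_bound_of_continuous hφsmooth.continuous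
  have hFi : Integrable F := by
    have h1 : IntegrableOn (fun p => α p * g p) U :=
      hgU.bdd_mul (c := A) hαm ((ae_restrict_iff' hUo.measurableSet).2
        (ae_of_all _ fun p hp => hα.2.1 p hp))
    have h2 : IntegrableOn (fun p => φ (z + p) * (α p * g p)) U :=
      h1.bdd_mul (c := B)
        (hφsmooth.continuous.comp (continuous_const.add continuous_id)).aestronglyMeasurable
        (ae_of_all _ fun p => hB _)
    have h3 : IntegrableOn F U := h2.congr_fun (fun p hp => by simp only [hFdef, hm p hp])
      hUo.measurableSet
    exact (integrableOn_iff_integrable_of_support_subset fun p hp => by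
      by_contra hpU
      exact hp (by simp [hFdef, hφ0 p hpU])).1 h3
  have hLm : Measurable fun p : ℝ × ℝ => dot2 p v := by
    unfold dot2
    fun_prop
  obtain ⟨C, hC⟩ := hK
  obtain ⟨M, hM0, hM⟩ := rpow_neg_mul_log_pow_le hlt k
  have hdecay : ∀ t : ℝ, t ≠ 0 → ‖∫ p, (F p : ℂ) *
      Complex.exp (Complex.I * ((t * dot2 p v : ℝ) : ℂ))‖ ≤ |C| * M * |t| ^ (-δ') := by
    intro t ht
    have h1 := hC (t • v) (hS t)
    rw [norm_Kphi_eq_norm_translate φ m z, nrm2_smul, hv, mul_one] at h1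
    have h2 : ∀ p, dot2 (t • v) p = t * dot2 p v := fun p => by
      simp only [dot2, Prod.smul_fst, Prod.smul_snd, smul_eq_mul]; ring
    simp only [h2] at h1
    refine h1.trans ?_
    have hlog : 0 ≤ Real.log (2 + |t|) := Real.log_nonneg (by linarith [abs_nonneg t])
    have hpos : 0 < 2 + |t| := by positivity
    calc C * (2 + |t|) ^ (-δ) * Real.log (2 + |t|) ^ k
        = C * ((2 + |t|) ^ (-δ) * Real.log (2 + |t|) ^ k) := by ring
      _ ≤ |C| * ((2 + |t|) ^ (-δ) * Real.log (2 + |t|) ^ k) :=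
        mul_le_mul_of_nonneg_right (le_abs_self C)
          (mul_nonneg (Real.rpow_nonneg hpos.le _) (pow_nonneg hlog k))
      _ ≤ |C| * (M * (2 + |t|) ^ (-δ')) :=
        mul_le_mul_of_nonneg_left (hM _ (by linarith [abs_nonneg t])) (abs_nonneg C)
      _ ≤ |C| * (M * |t| ^ (-δ')) := by
        refine mul_le_mul_of_nonneg_left (mul_le_mul_of_nonneg_left ?_ hM0) (abs_nonneg C)
        exact Real.rpow_le_rpow_of_nonpos (abs_pos.2 ht) (by linarith) (by linarith)
      _ = _ := by ring
  obtain ⟨C', hC'⟩ := setIntegral_strip_le_of_fourier_decay hFi hF0 hLm hδ'1 hdecay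
  have hnear : ∀ᶠ p in 𝓝 (0 : ℝ × ℝ), p ∈ U ∧ φ (z + p) = 1 := by
    refine (hUo.eventually_mem hU0).and ?_
    have : Tendsto (fun p : ℝ × ℝ => z + p) (𝓝 0) (𝓝 z) := by
      have hcont : Continuous fun p : ℝ × ℝ => z + p := by fun_prop
      have h0 := hcont.tendsto 0
      rwa [add_zero] at h0
    exact this.eventually hφone
  obtain ⟨ρ, hρ, hball⟩ := Metric.eventually_nhds_iff.1 hnear
  refine ⟨c⁻¹ * C', ρ, hρ, fun r hr T hT hTρ hTr => ?_⟩
  have hTn : ∀ p ∈ T, p ∈ U ∧ φ (z + p) = 1 := fun p hp => hball (by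
    rw [dist_zero_right, Prod.norm_def]
    exact max_lt (hTρ p hp).1 (hTρ p hp).2)
  have h1 : ∫ p in T, c * g p ≤ ∫ p in T, F p := by
    refine setIntegral_mono_on ((hgU.mono_set fun p hp => (hTn p hp).1).const_mul c)
      hFi.integrableOn hT fun p hp => ?_
    obtain ⟨hpU, hp1⟩ := hTn p hp
    simp only [hFdef, hp1, one_mul, hm p hpU]
    exact mul_le_mul_of_nonneg_right (hαc p hpU).le (hg0 p)
  have h2 : ∫ p in T, F p ≤ ∫ p in {p | |dot2 p v| < r}, F p :=
    setIntegral_mono_set hFi.integrableOn (ae_of_all _ hF0)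
      (LE.le.eventuallyLE hTr)
  rw [integral_const_mul] at h1
  have h3 := (h1.trans h2).trans (hC' r hr)
  rw [mul_assoc, inv_mul_eq_div, le_div_iff₀ hc, mul_comm]
  exact h3

theorem sq_dot2_le (p v : ℝ × ℝ) (hv : nrm2 v = 1) : (dot2 p v) ^ 2 ≤ p.1 ^ 2 + p.2 ^ 2 := by
  have h : v.1 ^ 2 + v.2 ^ 2 = 1 := Real.sqrt_eq_one.1 hv
  have : p.1 ^ 2 + p.2 ^ 2 = (p.1 ^ 2 + p.2 ^ 2) * (v.1 ^ 2 + v.2 ^ 2) := by rw [h, mul_one]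
  rw [this, dot2]
  nlinarith [sq_nonneg (p.1 * v.2 - p.2 * v.1)]

theorem sq_add_sq_eq_dot2 (p v : ℝ × ℝ) (hv : nrm2 v = 1) :
    p.1 ^ 2 + p.2 ^ 2 = (dot2 p v) ^ 2 + (dot2 p (perp2 v)) ^ 2 := by
  have h : v.1 ^ 2 + v.2 ^ 2 = 1 := Real.sqrt_eq_one.1 hv
  have : p.1 ^ 2 + p.2 ^ 2 = (p.1 ^ 2 + p.2 ^ 2) * (v.1 ^ 2 + v.2 ^ 2) := by rw [h, mul_one]
  rw [this, dot2, dot2, perp2]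
  ring

theorem measurableSet_strip2 (v : ℝ × ℝ) (r c : ℝ) : MeasurableSet (strip2 v r c) := by
  have h : ∀ w : ℝ × ℝ, Measurable fun p : ℝ × ℝ => |dot2 p w| := fun w => by
    unfold dot2
    fun_prop
  exact (measurableSet_lt (h v) measurable_const).inter
    (measurableSet_lt (h (perp2 v)) measurable_const)

theorem measurableSet_disk2 (r : ℝ) : MeasurableSet (disk2 r) := by
  unfold disk2
  exact measurableSet_lt (by fun_prop) measurable_const

/-- Sharpness of the kernel estimates.  `U` is a neighborhood of the origin on which the local
multiplier setup holds with `α > c > 0` and on which `g` is integrable; "`φ` has sufficiently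
small support" means that the support of `φ`, moved to the origin, lies in `U`.
The three conclusions say that one cannot improve the exponent `δ_v` on the strip `l_H` in the
direction `v` (the choice `k = 0` is the bound without logarithm), the exponent `ε` on any such
strip, and the exponent `min_v δ_v` on the whole plane. -/
theorem kernel_bound_sharp {n : ℕ} (f : Fin n → ℝ × ℝ → ℝ) (γ : Fin n → ℝ) (E : Set (ℝ × ℝ))
    (hsf : StandardForm n f γ E)
    (x₀ y₀ A : ℝ) (hA : 0 < A) (α m : ℝ × ℝ → ℝ)
    (U : Set (ℝ × ℝ)) (hUo : IsOpen U) (hU0 : (0 : ℝ × ℝ) ∈ U)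
    (hgU : IntegrableOn (stdFun n f γ E) U)
    (hα : AlphaBound α A U)
    (hm : ∀ p ∈ U, m ((x₀, y₀) + p) = α p * stdFun n f γ E p)
    (c : ℝ) (hc : 0 < c) (hαc : ∀ p ∈ U, c < α p)
    (φ : ℝ × ℝ → ℝ) (hφsmooth : ContDiff ℝ ∞ φ) (hφcpt : HasCompactSupport φ)
    (hφnn : ∀ p, 0 ≤ φ p) (hφone : ∀ᶠ p in 𝓝 ((x₀, y₀) : ℝ × ℝ), φ p = 1)
    (hφsupp : ∀ p : ℝ × ℝ, (x₀, y₀) + p ∈ tsupport φ → p ∈ U) :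
    (∀ (v : ℝ × ℝ) (δv : ℝ) (ev : ℕ), nrm2 v = 1 → StripBound (stdFun n f γ E) v δv ev →
      δv < 1 → ∀ H > (0 : ℝ), ∀ δ > δv, ∀ k : ℕ,
        ¬ HasDecayOn (Kphi φ m) (lineNhd v H) δ k) ∧
    (∀ (ε : ℝ) (d : ℕ), BallBound (stdFun n f γ E) ε d →
      ε < 1 → ∀ v : ℝ × ℝ, nrm2 v = 1 → ∀ H > (0 : ℝ), ∀ δ > ε, ∀ k : ℕ,
        ¬ HasDecayOn (Kphi φ m) (lineNhd v H) δ k) ∧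
    (∀ δ₀ : ℝ,
      IsGLB {δv : ℝ | ∃ (v : ℝ × ℝ) (ev : ℕ),
        nrm2 v = 1 ∧ StripBound (stdFun n f γ E) v δv ev} δ₀ →
      δ₀ < 1 → ∀ δ > δ₀, ∀ k : ℕ, ¬ HasDecayOn (Kphi φ m) Set.univ δ k) := by
  have key := fun {v : ℝ × ℝ} (hv : nrm2 v = 1) {S : Set (ℝ × ℝ)} (hS : ∀ t : ℝ, t • v ∈ S)
      {δ δ' : ℝ} {k : ℕ} => setIntegral_le_of_hasDecayOn (stdFun_nonneg n f γ E) hUo hU0 hgU hα hm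
        hc hαc hφsmooth hφcpt hφnn hφone hφsupp hv hS (δ := δ) (δ' := δ') (k := k)
  have strip : ∀ (v : ℝ × ℝ) (δv : ℝ) (ev : ℕ), nrm2 v = 1 →
      StripBound (stdFun n f γ E) v δv ev → δv < 1 → ∀ S : Set (ℝ × ℝ), (∀ t : ℝ, t • v ∈ S) →
      ∀ δ > δv, ∀ k : ℕ, ¬ HasDecayOn (Kphi φ m) S δ k := by
    intro v δv ev hv hsb h1 S hS δ hδ k hK
    obtain ⟨hδv, -, cv, hcv, hcb⟩ := hsb
    obtain ⟨δ', hδ'v, hδ'⟩ := exists_between (lt_min h1 hδ)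
    obtain ⟨C', ρ, hρ, hb⟩ := key hv hS (hδv.trans hδ'v) (hδ'.trans_le (min_le_left _ _))
      (hδ'.trans_le (min_le_right _ _)) hK
    obtain ⟨c', hc'0, hc'⟩ := exists_between (lt_min hcv (half_pos hρ))
    obtain ⟨a, ha, b, -, hab⟩ := hcb c' hc'0 (hc'.trans_le (min_le_left _ _))
    refine not_lower_rpow_log_le_rpow ha hc'0 hδ'v fun r hr hrc => (hab r hr hrc).1.trans
      (hb r hr _ (measurableSet_strip2 v r c') (fun p hp => ?_) fun p hp => hp.1)
    have hcρ : c' < ρ / 2 := hc'.trans_le (min_le_right _ _)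
    have hd1 : (dot2 p v) ^ 2 < (ρ / 2) ^ 2 :=
      sq_lt_sq' (by linarith [(abs_lt.1 hp.1).1]) (by linarith [(abs_lt.1 hp.1).2])
    have hd2 : (dot2 p (perp2 v)) ^ 2 < (ρ / 2) ^ 2 :=
      sq_lt_sq' (by linarith [(abs_lt.1 hp.2).1]) (by linarith [(abs_lt.1 hp.2).2])
    have hsum := sq_add_sq_eq_dot2 p v hv
    exact ⟨abs_lt_of_sq_lt_sq (by nlinarith [sq_nonneg p.2]) hρ.le,
      abs_lt_of_sq_lt_sq (by nlinarith [sq_nonneg p.1]) hρ.le⟩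
  refine ⟨fun v δv ev hv hsb h1 H hH => strip v δv ev hv hsb h1 _ (smul_mem_lineNhd v hH), ?_, ?_⟩
  · intro ε d hbb h1 v hv H hH δ hδ k hK
    obtain ⟨hε, -, c₁, hc₁, c₂, -, c₃, hc₃, hr⟩ := hbb
    obtain ⟨δ', hεδ', hδ'⟩ := exists_between (lt_min h1 hδ)
    obtain ⟨C', ρ, hρ, hb⟩ := key hv (smul_mem_lineNhd v hH) (hε.trans hεδ')
      (hδ'.trans_le (min_le_left _ _)) (hδ'.trans_le (min_le_right _ _)) hK
    refine not_lower_rpow_log_le_rpow hc₁ (lt_min hc₃ hρ) hεδ' fun r hr0 hrc =>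
      (hr r hr0 (hrc.trans_le (min_le_left _ _))).1.trans
        (hb r hr0 _ (measurableSet_disk2 r) (fun p hp => ?_) fun p hp => ?_)
    · have hrρ : r < ρ := hrc.trans_le (min_le_right _ _)
      have hp' : p.1 ^ 2 + p.2 ^ 2 < r ^ 2 := hp
      exact ⟨(abs_lt_of_sq_lt_sq (by nlinarith [sq_nonneg p.2]) hr0.le).trans hrρ,
        (abs_lt_of_sq_lt_sq (by nlinarith [sq_nonneg p.1]) hr0.le).trans hrρ⟩
    · exact abs_lt_of_sq_lt_sq ((sq_dot2_le p v hv).trans_lt hp) hr0.le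
  · intro δ₀ hglb h1 δ hδ k
    obtain ⟨δv, ⟨v, ev, hv, hsb⟩, hlt⟩ := (isGLB_lt_iff hglb).1 (lt_min h1 hδ)
    exact strip v δv ev hv hsb (hlt.trans_le (min_le_left _ _)) _ (fun _ => mem_univ _) δ
      (hlt.trans_le (min_le_right _ _)) k
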